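/- arXiv:2202.04722 — 2 statements merged into one kernel-verified Lean document; each statement's English description precedes it below -/
import Mathlib

section
/- Let N be a positive integer, h = 2π/(2N+1), and let 0 ≤ α < 1/4. Let δ_j, for −N ≤ j ≤ N, be real numbers with |δ_j| ≤ α, and let F and F̃ be the (2N+1)×(2N+1) complex matrices with entries F_{jk} = exp(−2πi jk/(2N+1)) and F̃_{jk} = exp(−2πi (j+δ_j)k/(2N+1)) for −N ≤ j,k ≤ N. Then ‖F − F̃‖₂ ≤ φ_α ‖F‖₂ = φ_α √(2N+1), where φ_α = 1 − cos(πα) + sin(πα) and ‖·‖₂ denotes the spectral (operator 2-)norm. -/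
open Real

lemma integral_exp_I_eq_sinc (β : ℝ) :
    ∫ x in (-π)..π, Complex.exp (Complex.I * (β * x : ℝ)) = 2 * π * sinc (π * β) := by
  rcases eq_or_ne β 0 with rfl | hβ
  · simp; ring
  have hc : Complex.I * (β : ℂ) ≠ 0 := by simp [hβ]
  have h := integral_exp_mul_complex (a := -π) (b := π) hc
  have hβ' : (β : ℂ) ≠ 0 := by exact_mod_cast hβ
  have hpi : (π : ℂ) ≠ 0 := by exact_mod_cast pi_ne_zero
  rw [sinc_of_ne_zero (by positivity)]
  simp only [Complex.ofReal_mul, ← mul_assoc]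
  rw [h]
  push_cast
  rw [Complex.sin]
  field_simp
  rw [Complex.I_sq]
  ring

lemma hasSum_fourier_of_fourierIntegral_eq {f : ℝ → ℂ} (hf : Continuous f) (hper : f (-π) = f π)
    {c : ℤ → ℂ} (hc : Summable c)
    (hcoeff : ∀ n : ℤ, ∫ x in (-π)..π, Complex.exp (Complex.I * (-n * x : ℝ)) * f x = 2 * π * c n)
    {x : ℝ} (hx : |x| ≤ π) :
    HasSum (fun n : ℤ => c n * Complex.exp (Complex.I * (n * x : ℝ))) (f x) := by
  have : Fact (0 < 2 * π) := ⟨two_pi_pos⟩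
  have hend : -π + 2 * π = π := by ring
  have hpi : (π : ℂ) ≠ 0 := by exact_mod_cast pi_ne_zero
  let g : C(AddCircle (2 * π), ℂ) := ⟨AddCircle.liftIco (2 * π) (-π) f,
    AddCircle.liftIco_continuous (by rw [hend, hper]) hf.continuousOn⟩
  have hg : fourierCoeff g = c := by
    ext n
    change fourierCoeff (AddCircle.liftIco (2 * π) (-π) f) n = c n
    rw [fourierCoeff_liftIco_eq, fourierCoeffOn_eq_integral, hend]
    have : ∀ x : ℝ, fourier (-n) (x : AddCircle (π - -π)) • f x =
        Complex.exp (Complex.I * (-n * x : ℝ)) * f x := by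
      intro x
      rw [fourier_coe_apply, smul_eq_mul]
      congr 2
      push_cast
      field_simp
      ring
    simp only [this, hcoeff]
    rw [Complex.real_smul]
    push_cast
    field_simp
    ring
  have hsum := has_pointwise_sum_fourier_series_of_summable (f := g) (by rwa [hg])
    (x : AddCircle (2 * π))
  have hval : g (x : AddCircle (2 * π)) = f x := by
    change AddCircle.liftIco (2 * π) (-π) f x = f x
    obtain ⟨h1, h2⟩ := abs_le.1 hx
    rcases h2.eq_or_lt with h2 | h2
    · have hxp : x = -π + 2 * π := by rw [h2, hend]
      rw [hxp, AddCircle.coe_add_period,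
        AddCircle.liftIco_coe_apply ⟨le_rfl, by linarith [pi_pos]⟩, hend,
        hper]
    · exact AddCircle.liftIco_coe_apply ⟨h1, by linarith⟩
  rw [hval, hg] at hsum
  refine hsum.congr_fun fun n => ?_
  rw [fourier_coe_apply, smul_eq_mul]
  congr 2
  push_cast
  field_simp


/-- Fourier coefficients on `[-π, π]` of `x ↦ 1 - cos (δ x)`. -/
noncomputable def kadecCosCoeff (δ : ℝ) (n : ℤ) : ℝ :=
  sinc (π * n) - (sinc (π * (δ - n)) + sinc (π * (δ + n))) / 2

/-- Fourier coefficients on `[-π, π]` of `x ↦ i sin (δ x) exp (-i x / 2)`. -/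
noncomputable def kadecSinCoeff (δ : ℝ) (n : ℤ) : ℝ :=
  (sinc (π * (δ - (n + 1 / 2))) - sinc (π * (δ + (n + 1 / 2)))) / 2

lemma kadecCosCoeff_zero (δ : ℝ) : kadecCosCoeff δ 0 = 1 - sinc (π * δ) := by
  simp [kadecCosCoeff]

lemma one_le_sq_intCast {n : ℤ} (hn : n ≠ 0) : (1 : ℝ) ≤ (n : ℝ) ^ 2 := by
  have h : 0 < n ^ 2 := by positivity
  exact_mod_cast Int.add_one_le_of_lt h

lemma one_fourth_le_sq_intCast_add_half (n : ℤ) : (1 / 4 : ℝ) ≤ ((n : ℝ) + 1 / 2) ^ 2 := by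
  have h : (0 : ℤ) ≤ n * (n + 1) := by
    rcases le_or_gt 0 n with h | h
    · positivity
    · nlinarith
  have h' : (0 : ℝ) ≤ n * (n + 1) := by exact_mod_cast h
  nlinarith

lemma kadecCosCoeff_of_ne_zero {δ : ℝ} (hδ : |δ| ≤ 1 / 4) {n : ℤ} (hn : n ≠ 0) :
    kadecCosCoeff δ n = (-1) ^ n * (δ * sin (π * δ) / (π * ((n : ℝ) ^ 2 - δ ^ 2))) := by
  have hsq : δ ^ 2 ≤ (1 / 4) ^ 2 := sq_le_sq' (abs_le.1 hδ).1 (abs_le.1 hδ).2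
  have hprod : (n : ℝ) ^ 2 - δ ^ 2 ≠ 0 := by nlinarith [one_le_sq_intCast hn]
  have h1 : δ - n ≠ 0 := fun h => hprod (by linear_combination (-δ - n) * h)
  have h2 : δ + n ≠ 0 := fun h => hprod (by linear_combination (n - δ) * h)
  have hn' : (n : ℝ) ≠ 0 := by exact_mod_cast hn
  have hs : sin (π * (δ - n)) = (-1) ^ n * sin (π * δ) := by
    rw [← sin_sub_int_mul_pi]; ring_nf
  have hs' : sin (π * (δ + n)) = (-1) ^ n * sin (π * δ) := by
    rw [← sin_add_int_mul_pi]; ring_nf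
  have hz : sin (π * n) = 0 := by rw [mul_comm, sin_int_mul_pi]
  rw [kadecCosCoeff, sinc_of_ne_zero (mul_ne_zero pi_ne_zero hn'),
    sinc_of_ne_zero (mul_ne_zero pi_ne_zero h1), sinc_of_ne_zero (mul_ne_zero pi_ne_zero h2),
    hs, hs', hz]
  field_simp
  ring

lemma kadecSinCoeff_eq {δ : ℝ} (hδ : |δ| ≤ 1 / 4) (n : ℤ) :
    kadecSinCoeff δ n =
      (-1) ^ n * (δ * cos (π * δ) / (π * (((n : ℝ) + 1 / 2) ^ 2 - δ ^ 2))) := by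
  have hsq : δ ^ 2 ≤ (1 / 4) ^ 2 := sq_le_sq' (abs_le.1 hδ).1 (abs_le.1 hδ).2
  have hs : sin (π * (δ - (n + 1 / 2))) = -((-1) ^ n * cos (π * δ)) := by
    rw [← cos_sub_int_mul_pi, ← sin_sub_pi_div_two]; ring_nf
  have hs' : sin (π * (δ + (n + 1 / 2))) = (-1) ^ n * cos (π * δ) := by
    rw [← cos_add_int_mul_pi, ← sin_add_pi_div_two]; ring_nf
  have hprod : ((n : ℝ) + 1 / 2) ^ 2 - δ ^ 2 ≠ 0 := by
    nlinarith [one_fourth_le_sq_intCast_add_half n]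
  rw [kadecSinCoeff]
  generalize (n : ℝ) + 1 / 2 = μ at *
  have h1 : δ - μ ≠ 0 := fun h => hprod (by linear_combination (-δ - μ) * h)
  have h2 : δ + μ ≠ 0 := fun h => hprod (by linear_combination (μ - δ) * h)
  rw [sinc_of_ne_zero (mul_ne_zero pi_ne_zero h1), sinc_of_ne_zero (mul_ne_zero pi_ne_zero h2),
    hs, hs']
  field_simp
  ring

lemma neg_one_zpow_mul_self (n : ℤ) : ((-1 : ℝ) ^ n) * (-1) ^ n = 1 := by
  rw [← mul_zpow]; simp

lemma abs_neg_one_zpow_mul (n : ℤ) (y : ℝ) : |(-1) ^ n * y| = |y| := by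
  rw [abs_mul, abs_zpow]; simp

lemma abs_mul_div_le_inv_sq {δ t μ : ℝ} (hδ : |δ| ≤ 1 / 4) (ht : |t| ≤ 1) (hμ : 1 / 4 ≤ μ ^ 2) :
    |δ * t / (π * (μ ^ 2 - δ ^ 2))| ≤ 1 / |μ| ^ (2 : ℝ) := by
  have hsq : δ ^ 2 ≤ (1 / 4) ^ 2 := sq_le_sq' (abs_le.1 hδ).1 (abs_le.1 hδ).2
  have hprod : 0 < μ ^ 2 - δ ^ 2 := by nlinarith
  rw [rpow_two, sq_abs, abs_div, abs_mul, abs_of_pos (mul_pos pi_pos hprod),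
    div_le_div_iff₀ (mul_pos pi_pos hprod) (by linarith)]
  have h1 : |δ| * |t| ≤ 1 / 4 * 1 := mul_le_mul hδ ht (abs_nonneg _) (by norm_num)
  have h2 : |δ| * |t| * μ ^ 2 ≤ 1 / 4 * 1 * μ ^ 2 := mul_le_mul_of_nonneg_right h1 (by positivity)
  nlinarith [pi_gt_three]

lemma summable_kadecCosCoeff {δ : ℝ} (hδ : |δ| ≤ 1 / 4) : Summable (kadecCosCoeff δ) := by
  have hs := ((summable_one_div_int_add_rpow 0 2).2 one_lt_two).add
    (hasSum_ite_eq (0 : ℤ) |kadecCosCoeff δ 0|).summable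
  refine hs.of_norm_bounded fun n => ?_
  rw [norm_eq_abs]
  rcases eq_or_ne n 0 with rfl | hn
  · simp
  · rw [kadecCosCoeff_of_ne_zero hδ hn, abs_neg_one_zpow_mul, if_neg hn, add_zero, add_zero]
    exact abs_mul_div_le_inv_sq hδ (abs_sin_le_one _) (by linarith [one_le_sq_intCast hn])

lemma summable_kadecSinCoeff {δ : ℝ} (hδ : |δ| ≤ 1 / 4) : Summable (kadecSinCoeff δ) := by
  refine ((summable_one_div_int_add_rpow (1 / 2) 2).2 one_lt_two).of_norm_bounded fun n => ?_
  rw [norm_eq_abs, kadecSinCoeff_eq hδ, abs_neg_one_zpow_mul]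
  exact abs_mul_div_le_inv_sq hδ (abs_cos_le_one _) (one_fourth_le_sq_intCast_add_half n)

lemma mul_sin_le_mul_sin {x y : ℝ} (hx : 0 ≤ x) (hxy : x ≤ y) (hy : y ≤ π) :
    x * sin y ≤ y * sin x := by
  rcases hx.eq_or_lt with rfl | hx
  · simp
  have hy0 : 0 < y := hx.trans_le hxy
  have h := strictConcaveOn_sin_Icc.concaveOn.2 (⟨le_rfl, pi_pos.le⟩ : (0 : ℝ) ∈ Set.Icc 0 π)
    ⟨hy0.le, hy⟩ (sub_nonneg.2 ((div_le_one hy0).2 hxy)) (div_pos hx hy0).le (by ring)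
  simp only [smul_eq_mul, sin_zero, mul_zero, zero_add, div_mul_cancel₀ _ hy0.ne'] at h
  rw [div_mul_eq_mul_div, div_le_iff₀ hy0] at h
  linarith

lemma sinc_le_sinc {x y : ℝ} (hx : 0 ≤ x) (hxy : x ≤ y) (hy : y ≤ π) : sinc y ≤ sinc x := by
  rcases hx.eq_or_lt with rfl | hx
  · simpa using sinc_le_one y
  have hy0 : 0 < y := hx.trans_le hxy
  rw [sinc_of_ne_zero hx.ne', sinc_of_ne_zero hy0.ne', div_le_div_iff₀ hy0 hx]
  linarith [mul_sin_le_mul_sin hx.le hxy hy]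

lemma mul_cos_pi_mul_le {δ α : ℝ} (hδ : 0 ≤ δ) (hδα : δ ≤ α) (hα : α ≤ 1 / 4) :
    δ * cos (π * δ) ≤ α * cos (π * α) := by
  have hpi := pi_pos
  have hαpi : π * α ≤ π / 4 := by nlinarith
  have hle : π * δ ≤ π * α := by gcongr
  have h0 : 0 ≤ π * δ := by positivity
  have hsin0 : 0 ≤ sin (π * α) := sin_nonneg_of_nonneg_of_le_pi (by linarith) (by linarith)
  have hsc : sin (π * α) ≤ cos (π * α) := by
    rw [← sin_pi_div_two_sub]
    exact sin_le_sin_of_le_of_le_pi_div_two (by linarith) (by linarith) (by linarith)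
  have hdiff : cos (π * δ) - cos (π * α) ≤ π * (α - δ) * sin (π * α) := by
    have h1 : sin ((π * α - π * δ) / 2) ≤ (π * α - π * δ) / 2 := sin_le (by linarith)
    have h2 : sin ((π * δ + π * α) / 2) ≤ sin (π * α) :=
      sin_le_sin_of_le_of_le_pi_div_two (by linarith) (by linarith) (by linarith)
    have h3 : 0 ≤ sin ((π * α - π * δ) / 2) :=
      sin_nonneg_of_nonneg_of_le_pi (by linarith) (by linarith)
    have h4 := mul_le_mul h2 h1 h3 hsin0
    rw [cos_sub_cos, show (π * δ - π * α) / 2 = -((π * α - π * δ) / 2) by ring, sin_neg]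
    linarith
  have hδpi : π * δ ≤ 1 := by nlinarith [pi_le_four]
  have h5 : δ * (cos (π * δ) - cos (π * α)) ≤ (α - δ) * cos (π * α) :=
    calc δ * (cos (π * δ) - cos (π * α)) ≤ δ * (π * (α - δ) * sin (π * α)) := by gcongr
      _ = (π * δ) * ((α - δ) * sin (π * α)) := by ring
      _ ≤ 1 * ((α - δ) * sin (π * α)) := by
        gcongr
      _ = (α - δ) * sin (π * α) := one_mul _
      _ ≤ (α - δ) * cos (π * α) := by
        gcongr
  linarith

lemma sq_le_sq_of_abs_le {δ α : ℝ} (h : |δ| ≤ α) : δ ^ 2 ≤ α ^ 2 :=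
  sq_le_sq' (abs_le.1 h).1 (abs_le.1 h).2

lemma abs_kadecCosCoeff_le {δ α : ℝ} (hδ : |δ| ≤ α) (hα : α ≤ 1 / 4) (n : ℤ) :
    |kadecCosCoeff δ n| ≤ (-1) ^ n * kadecCosCoeff α n := by
  have hα0 : 0 ≤ α := (abs_nonneg δ).trans hδ
  have hpi := pi_pos
  rcases eq_or_ne n 0 with rfl | hn
  · have hsinc : sinc (π * δ) = sinc (π * |δ|) := by
      rcases abs_choice δ with h | h <;> rw [h]
      rw [mul_neg, sinc_neg]
    rw [kadecCosCoeff_zero, kadecCosCoeff_zero, abs_of_nonneg (sub_nonneg.2 (sinc_le_one _)),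
      zpow_zero, one_mul, hsinc]
    gcongr
    exact sinc_le_sinc (by positivity) (by gcongr) (by nlinarith)
  · rw [kadecCosCoeff_of_ne_zero (hδ.trans hα) hn,
      kadecCosCoeff_of_ne_zero ((abs_of_nonneg hα0).trans_le hα) hn, abs_neg_one_zpow_mul,
      ← mul_assoc, neg_one_zpow_mul_self, one_mul]
    have hn2 := one_le_sq_intCast hn
    have hsq := sq_le_sq_of_abs_le hδ
    have hpos : 0 < (n : ℝ) ^ 2 - α ^ 2 := by nlinarith
    have hαpi : π * α ≤ π / 4 := by nlinarith
    have hδ' : π * |δ| ≤ π * α := by gcongr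
    have hδ0 : 0 ≤ π * |δ| := by positivity
    have heven : |δ * sin (π * δ)| = |δ| * sin (π * |δ|) := by
      have h : 0 ≤ |δ| * sin (π * |δ|) :=
        mul_nonneg (abs_nonneg _) (sin_nonneg_of_nonneg_of_le_pi hδ0 (by linarith))
      rw [← abs_of_nonneg h]
      rcases abs_choice δ with h | h <;> simp [h]
    rw [abs_div, abs_of_pos (mul_pos hpi (by linarith : 0 < (n : ℝ) ^ 2 - δ ^ 2)), heven]
    have hsin : sin (π * |δ|) ≤ sin (π * α) :=
      sin_le_sin_of_le_of_le_pi_div_two (by linarith) (by linarith) hδ'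
    have hsin0 : 0 ≤ sin (π * α) := sin_nonneg_of_nonneg_of_le_pi (by linarith) (by linarith)
    have hsin1 : 0 ≤ sin (π * |δ|) := sin_nonneg_of_nonneg_of_le_pi hδ0 (by linarith)
    gcongr

lemma abs_kadecSinCoeff_le {δ α : ℝ} (hδ : |δ| ≤ α) (hα : α ≤ 1 / 4) (n : ℤ) :
    |kadecSinCoeff δ n| ≤ (-1) ^ n * kadecSinCoeff α n := by
  have hα0 : 0 ≤ α := (abs_nonneg δ).trans hδ
  have hpi := pi_pos
  rw [kadecSinCoeff_eq (hδ.trans hα),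
    kadecSinCoeff_eq ((abs_of_nonneg hα0).trans_le hα), abs_neg_one_zpow_mul,
    ← mul_assoc, neg_one_zpow_mul_self, one_mul]
  have hn2 := one_fourth_le_sq_intCast_add_half n
  have hsq := sq_le_sq_of_abs_le hδ
  have hpos : 0 < ((n : ℝ) + 1 / 2) ^ 2 - α ^ 2 := by nlinarith
  have hδpi : π * |δ| ≤ π / 4 := by nlinarith
  have hδ0 : 0 ≤ π * |δ| := by positivity
  have heven : |δ * cos (π * δ)| = |δ| * cos (π * |δ|) := by
    have h : 0 ≤ |δ| * cos (π * |δ|) :=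
      mul_nonneg (abs_nonneg _) (cos_nonneg_of_neg_pi_div_two_le_of_le (by linarith) (by linarith))
    rw [← abs_of_nonneg h]
    rcases abs_choice δ with h | h <;> simp [h]
  rw [abs_div, abs_of_pos (mul_pos hpi (by linarith : 0 < ((n : ℝ) + 1 / 2) ^ 2 - δ ^ 2)), heven]
  have hcos := mul_cos_pi_mul_le (abs_nonneg δ) hδ hα
  have hcos0 : 0 ≤ α * cos (π * α) := by
    have := mul_cos_pi_mul_le le_rfl hα0 hα
    simpa using this
  gcongr

lemma intervalIntegrable_exp_I_mul (β : ℝ) : IntervalIntegrable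
    (fun x : ℝ => Complex.exp (Complex.I * (β * x : ℝ))) MeasureTheory.volume (-π) π :=
  Continuous.intervalIntegrable (by fun_prop) _ _

lemma hasSum_kadecCosCoeff {δ x : ℝ} (hδ : |δ| ≤ 1 / 4) (hx : |x| ≤ π) :
    HasSum (fun n : ℤ => (kadecCosCoeff δ n : ℂ) * Complex.exp (Complex.I * (n * x : ℝ)))
      ((1 - cos (δ * x) : ℝ) : ℂ) := by
  refine hasSum_fourier_of_fourierIntegral_eq (f := fun x : ℝ => ((1 - cos (δ * x) : ℝ) : ℂ))
    (by fun_prop) (by simp) (Complex.summable_ofReal.2 (summable_kadecCosCoeff hδ))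
    (fun n => ?_) hx
  have hpt : ∀ x : ℝ, Complex.exp (Complex.I * (-n * x : ℝ)) * ((1 - cos (δ * x) : ℝ) : ℂ) =
      Complex.exp (Complex.I * ((-n : ℝ) * x : ℝ)) -
        (Complex.exp (Complex.I * ((δ - n) * x : ℝ)) +
          Complex.exp (Complex.I * ((-δ - n) * x : ℝ))) / 2 := by
    intro x
    push_cast
    rw [Complex.cos,
      show Complex.I * ((δ - n) * x) = Complex.I * (-n * x) + δ * x * Complex.I by ring,
      show Complex.I * ((-δ - n) * x) = Complex.I * (-n * x) + -(δ * x) * Complex.I by ring,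
      Complex.exp_add, Complex.exp_add]
    ring
  simp only [hpt]
  rw [intervalIntegral.integral_sub (intervalIntegrable_exp_I_mul _)
      (((intervalIntegrable_exp_I_mul _).add (intervalIntegrable_exp_I_mul _)).div_const _),
    intervalIntegral.integral_div, intervalIntegral.integral_add (intervalIntegrable_exp_I_mul _)
      (intervalIntegrable_exp_I_mul _), integral_exp_I_eq_sinc, integral_exp_I_eq_sinc,
    integral_exp_I_eq_sinc, kadecCosCoeff, mul_neg, sinc_neg,
    show π * (-δ - n) = -(π * (δ + n)) by ring, sinc_neg]
  push_cast
  ring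

lemma hasSum_kadecSinCoeff {δ x : ℝ} (hδ : |δ| ≤ 1 / 4) (hx : |x| ≤ π) :
    HasSum (fun n : ℤ => (kadecSinCoeff δ n : ℂ) *
      Complex.exp (Complex.I * ((n + 1 / 2) * x : ℝ))) (Complex.I * (sin (δ * x) : ℝ)) := by
  have hpt : ∀ x : ℝ, Complex.exp (Complex.I * (-(1 / 2) * x : ℝ)) *
      (Complex.I * (sin (δ * x) : ℝ)) =
      (Complex.exp (Complex.I * ((δ - 1 / 2) * x : ℝ)) -
        Complex.exp (Complex.I * ((-δ - 1 / 2) * x : ℝ))) / 2 := by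
    intro x
    push_cast
    rw [Complex.sin,
      show Complex.I * ((δ - 1 / 2) * x) = Complex.I * (-(1 / 2) * x) + δ * x * Complex.I by ring,
      show Complex.I * ((-δ - 1 / 2) * x) =
        Complex.I * (-(1 / 2) * x) + -(δ * x) * Complex.I by ring,
      Complex.exp_add, Complex.exp_add]
    linear_combination (Complex.exp (Complex.I * (-(1 / 2) * x)) *
      (Complex.exp (-(δ * x) * Complex.I) - Complex.exp (δ * x * Complex.I)) / 2) * Complex.I_sq
  have h := hasSum_fourier_of_fourierIntegral_eq
    (f := fun x : ℝ => Complex.exp (Complex.I * (-(1 / 2) * x : ℝ)) *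
      (Complex.I * (sin (δ * x) : ℝ))) (by fun_prop) ?_
    (Complex.summable_ofReal.2 (summable_kadecSinCoeff hδ)) (fun n => ?_) hx
  · have h' := h.mul_left (Complex.exp (Complex.I * (1 / 2 * x : ℝ)))
    rw [← mul_assoc, ← Complex.exp_add, ← mul_add, ← Complex.ofReal_add,
      show 1 / 2 * x + -(1 / 2) * x = 0 by ring] at h'
    simp only [Complex.ofReal_zero, mul_zero, Complex.exp_zero, one_mul] at h'
    refine h'.congr_fun fun n => ?_
    rw [mul_left_comm, ← Complex.exp_add]
    congr 2
    push_cast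
    ring
  · have e1 : Complex.exp (Complex.I * (-(1 / 2) * -π : ℝ)) = Complex.I := by
      refine Eq.trans ?_ Complex.exp_pi_div_two_mul_I
      congr 1; push_cast; ring
    have e2 : Complex.exp (Complex.I * (-(1 / 2) * π : ℝ)) = -Complex.I := by
      refine Eq.trans ?_ Complex.exp_neg_pi_div_two_mul_I
      congr 1; push_cast; ring
    rw [e1, e2, mul_neg, sin_neg]
    push_cast
    ring
  · have hpt' : ∀ x : ℝ, Complex.exp (Complex.I * (-n * x : ℝ)) *
        (Complex.exp (Complex.I * (-(1 / 2) * x : ℝ)) * (Complex.I * (sin (δ * x) : ℝ))) =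
        (Complex.exp (Complex.I * ((δ - (n + 1 / 2)) * x : ℝ)) -
          Complex.exp (Complex.I * ((-δ - (n + 1 / 2)) * x : ℝ))) / 2 := by
      intro x
      rw [hpt, mul_div_assoc', mul_sub, ← Complex.exp_add, ← Complex.exp_add]
      congr 4 <;> · push_cast; ring
    simp only [hpt']
    rw [intervalIntegral.integral_div, intervalIntegral.integral_sub
      (intervalIntegrable_exp_I_mul _) (intervalIntegrable_exp_I_mul _), integral_exp_I_eq_sinc,
      integral_exp_I_eq_sinc, kadecSinCoeff,
      show π * (-δ - (n + 1 / 2)) = -(π * (δ + (n + 1 / 2))) by ring, sinc_neg]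
    push_cast
    ring

lemma exp_I_mul_int_mul_pi (n : ℤ) : Complex.exp (Complex.I * (n * π : ℝ)) = (-1) ^ n := by
  rw [← Complex.exp_pi_mul_I, ← Complex.exp_int_mul]
  congr 1
  push_cast
  ring

lemma hasSum_neg_one_zpow_mul_kadecCosCoeff {α : ℝ} (hα : |α| ≤ 1 / 4) :
    HasSum (fun n : ℤ => (-1) ^ n * kadecCosCoeff α n) (1 - cos (π * α)) := by
  have h := hasSum_kadecCosCoeff hα (abs_of_pos pi_pos).le
  rw [mul_comm α] at h
  rw [← Complex.hasSum_ofReal]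
  refine h.congr_fun fun n => ?_
  rw [exp_I_mul_int_mul_pi]
  push_cast
  ring

lemma hasSum_neg_one_zpow_mul_kadecSinCoeff {α : ℝ} (hα : |α| ≤ 1 / 4) :
    HasSum (fun n : ℤ => (-1) ^ n * kadecSinCoeff α n) (sin (π * α)) := by
  have h := (hasSum_kadecSinCoeff hα (abs_of_pos pi_pos).le).mul_left (-Complex.I)
  rw [mul_comm α, ← mul_assoc, neg_mul, Complex.I_mul_I, neg_neg, one_mul] at h
  rw [← Complex.hasSum_ofReal]
  refine h.congr_fun fun n => ?_
  have e : Complex.exp (Complex.I * ((n + 1 / 2) * π : ℝ)) = (-1) ^ n * Complex.I := by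
    rw [← exp_I_mul_int_mul_pi]
    nth_rw 3 [← Complex.exp_pi_div_two_mul_I]
    rw [← Complex.exp_add]
    congr 1
    push_cast
    ring
  rw [e]
  push_cast
  linear_combination ((-1) ^ n * (kadecSinCoeff α n : ℂ)) * Complex.I_sq

section Matrix

open scoped Matrix.Norms.L2Operator

lemma l2_opNorm_schur_series_le {ι m : Type*} [Fintype m] [DecidableEq m] (F G : Matrix m m ℂ)
    {c u : ι → m → ℂ} {C : ι → ℝ} {S : ℝ} (hC : HasSum C S) (hc : ∀ n j, ‖c n j‖ ≤ C n)
    (hu : ∀ n k, ‖u n k‖ ≤ 1) (hG : ∀ j k, HasSum (fun n => c n j * F j k * u n k) (G j k)) :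
    ‖G‖ ≤ S * ‖F‖ := by
  rcases isEmpty_or_nonempty m with hm | ⟨⟨j₀⟩⟩
  · have : G = 0 := Subsingleton.elim _ _
    have hF : F = 0 := Subsingleton.elim _ _
    simp [this, hF]
  have hsum : HasSum (fun n => Matrix.diagonal (c n) * F * Matrix.diagonal (u n)) G := by
    refine Pi.hasSum.2 fun j => Pi.hasSum.2 fun k => ?_
    simpa only [Matrix.mul_diagonal, Matrix.diagonal_mul] using hG j k
  refine hsum.norm_le_of_bounded (hC.mul_right ‖F‖) fun n => ?_
  have hCn : 0 ≤ C n := (norm_nonneg _).trans (hc n j₀)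
  calc ‖Matrix.diagonal (c n) * F * Matrix.diagonal (u n)‖
      ≤ ‖Matrix.diagonal (c n)‖ * ‖F‖ * ‖Matrix.diagonal (u n)‖ := norm_mul₃_le
    _ ≤ C n * ‖F‖ * 1 := by
      rw [Matrix.l2_opNorm_diagonal, Matrix.l2_opNorm_diagonal]
      gcongr
      · exact (pi_norm_le_iff_of_nonneg hCn).2 (hc n)
      · exact (pi_norm_le_iff_of_nonneg zero_le_one).2 (hu n)
    _ = C n * ‖F‖ := mul_one _

/-- The DFT matrix with centred indices satisfies `Fᴴ F = (2N + 1) I`. -/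
lemma dft_conjTranspose_mul_self (N : ℕ) (F : Matrix (Fin (2*N+1)) (Fin (2*N+1)) ℂ)
    (hF : ∀ j k, F j k =
      Complex.exp (-2 * (π : ℂ) * Complex.I * (((j : ℕ) : ℂ) - (N : ℂ)) *
        (((k : ℕ) : ℂ) - (N : ℂ)) / (2*(N : ℂ)+1))) :
    F.conjTranspose * F = Matrix.diagonal fun _ => (2 * N + 1 : ℂ) := by
  have hM : (2 * N + 1 : ℂ) ≠ 0 := by exact_mod_cast (2 * N).succ_ne_zero
  have hprod : ∀ j k l, star (F j k) * F j l = Complex.exp (-2 * π * Complex.I *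
      (((j : ℕ) : ℂ) - N) * (((l : ℕ) : ℂ) - ((k : ℕ) : ℂ)) / (2 * N + 1)) := by
    intro j k l
    rw [hF, hF, Complex.star_def, ← Complex.exp_conj, ← Complex.exp_add]
    congr 1
    simp only [map_div₀, map_mul, map_sub, map_add, map_neg, Complex.conj_I, Complex.conj_ofReal,
      map_natCast, map_ofNat, map_one]
    field_simp
    ring
  ext k l
  simp only [Matrix.mul_apply, Matrix.conjTranspose_apply, hprod]
  rcases eq_or_ne k l with rfl | hkl
  · simp
  rw [Matrix.diagonal_apply_ne _ hkl]
  set ζ := Complex.exp (-2 * π * Complex.I * (((l : ℕ) : ℂ) - ((k : ℕ) : ℂ)) / (2 * N + 1))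
    with hζ
  have hpow : ζ ^ (2 * N + 1) = 1 := by
    rw [hζ, ← Complex.exp_nat_mul, Complex.exp_eq_one_iff]
    refine ⟨(k : ℕ) - (l : ℕ), ?_⟩
    push_cast
    field_simp
    ring
  have hne : ζ ≠ 1 := by
    rw [hζ, Ne, Complex.exp_eq_one_iff]
    rintro ⟨n, hn⟩
    have hcast : (((k : ℕ) : ℂ) - ((l : ℕ) : ℂ)) = n * (2 * N + 1) := by
      have hpi : (π : ℂ) ≠ 0 := by exact_mod_cast pi_ne_zero
      field_simp at hn
      linear_combination hn
    have hint : ((k : ℕ) : ℤ) - ((l : ℕ) : ℤ) = n * (2 * N + 1) := by exact_mod_cast hcast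
    have hzero := Int.eq_zero_of_abs_lt_dvd (Dvd.intro_left n hint.symm)
      (abs_lt.2 ⟨by omega, by omega⟩)
    exact hkl (Fin.ext (by omega))
  have hterm : ∀ j : Fin (2 * N + 1), Complex.exp (-2 * π * Complex.I *
      (((j : ℕ) : ℂ) - N) * (((l : ℕ) : ℂ) - ((k : ℕ) : ℂ)) / (2 * N + 1)) =
      Complex.exp (-2 * π * Complex.I * (-N) * (((l : ℕ) : ℂ) - ((k : ℕ) : ℂ)) / (2 * N + 1)) *
        ζ ^ (j : ℕ) := by
    intro j
    rw [hζ, ← Complex.exp_nat_mul, ← Complex.exp_add]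
    congr 1
    ring
  simp only [hterm]
  rw [← Finset.mul_sum, Fin.sum_univ_eq_sum_range (fun j => ζ ^ j), geom_sum_eq hne, hpow]
  simp

lemma l2_opNorm_dft (N : ℕ) (F : Matrix (Fin (2*N+1)) (Fin (2*N+1)) ℂ)
    (hF : ∀ j k, F j k =
      Complex.exp (-2 * (π : ℂ) * Complex.I * (((j : ℕ) : ℂ) - (N : ℂ)) *
        (((k : ℕ) : ℂ) - (N : ℂ)) / (2*(N : ℂ)+1))) :
    ‖F‖ = Real.sqrt (2*N+1) := by
  have h := Matrix.l2_opNorm_conjTranspose_mul_self F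
  rw [dft_conjTranspose_mul_self N F hF, Matrix.l2_opNorm_diagonal, pi_norm_const] at h
  have hnorm : ‖(2 * N + 1 : ℂ)‖ = 2 * N + 1 := by
    exact_mod_cast Complex.norm_natCast (2 * N + 1)
  rw [hnorm] at h
  rw [h, Real.sqrt_mul_self (norm_nonneg _)]

end Matrix

/-- discrete Kadec-1/4 theorem: spectral-norm bound on `F - F̃`. -/
theorem nudft_kadec_spectral_bound (N : ℕ) (hN : 0 < N) (α : ℝ) (hα0 : 0 ≤ α) (hα : α < 1/4)
    (δ : Fin (2*N+1) → ℝ) (hδ : ∀ j, |δ j| ≤ α)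
    (F Ftil : Matrix (Fin (2*N+1)) (Fin (2*N+1)) ℂ)
    (hF : ∀ j k, F j k =
      Complex.exp (-2 * (π : ℂ) * Complex.I * (((j : ℕ) : ℂ) - (N : ℂ)) *
        (((k : ℕ) : ℂ) - (N : ℂ)) / (2*(N : ℂ)+1)))
    (hFtil : ∀ j k, Ftil j k =
      Complex.exp (-2 * (π : ℂ) * Complex.I * ((((j : ℕ) : ℂ) - (N : ℂ)) + (δ j : ℂ)) *
        (((k : ℕ) : ℂ) - (N : ℂ)) / (2*(N : ℂ)+1))) :
    ‖Matrix.toEuclideanCLM (𝕜 := ℂ) F‖ = Real.sqrt (2*N+1) ∧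
    ‖Matrix.toEuclideanCLM (𝕜 := ℂ) (F - Ftil)‖ ≤
      (1 - Real.cos (π*α) + Real.sin (π*α)) * ‖Matrix.toEuclideanCLM (𝕜 := ℂ) F‖ := by
  have hα' : |α| ≤ 1 / 4 := by rw [abs_of_nonneg hα0]; exact hα.le
  have hδ' : ∀ j, |δ j| ≤ 1 / 4 := fun j => (hδ j).trans hα.le
  refine ⟨l2_opNorm_dft N F hF, ?_⟩
  have hNpos : (0 : ℝ) < 2 * N + 1 := by positivity
  let x : Fin (2*N+1) → ℝ := fun k => 2 * π * ((k : ℕ) - N) / (2 * N + 1)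
  have hx : ∀ k, |x k| ≤ π := by
    intro k
    have hk : ((k : ℕ) : ℝ) ≤ 2 * N := by exact_mod_cast Nat.lt_succ_iff.1 k.2
    have hk0 : (0 : ℝ) ≤ (k : ℕ) := Nat.cast_nonneg _
    have hpi := pi_pos
    rw [abs_le, le_div_iff₀ hNpos, div_le_iff₀ hNpos]
    constructor <;> nlinarith
  let G : Matrix (Fin (2*N+1)) (Fin (2*N+1)) ℂ :=
    .of fun j k => F j k * ((1 - cos (δ j * x k) : ℝ) : ℂ)
  let H : Matrix (Fin (2*N+1)) (Fin (2*N+1)) ℂ :=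
    .of fun j k => F j k * (Complex.I * (sin (δ j * x k) : ℝ))
  have hsplit : F - Ftil = G + H := by
    ext j k
    have hshift : Ftil j k = F j k * Complex.exp (-(δ j * x k : ℝ) * Complex.I) := by
      rw [hF, hFtil, ← Complex.exp_add]
      congr 1
      simp only [x]
      push_cast
      ring
    simp only [Matrix.sub_apply, Matrix.add_apply, G, H, Matrix.of_apply, hshift,
      Complex.exp_mul_I, Complex.cos_neg, Complex.sin_neg]
    push_cast
    ring
  have hG := l2_opNorm_schur_series_le F G (c := fun n j => (kadecCosCoeff (δ j) n : ℂ))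
    (u := fun n k => Complex.exp (Complex.I * (n * x k : ℝ)))
    (hasSum_neg_one_zpow_mul_kadecCosCoeff hα')
    (fun n j => by simpa using abs_kadecCosCoeff_le (hδ j) hα.le n)
    (fun n k => (Complex.norm_exp_I_mul_ofReal _).le)
    (fun j k => ((hasSum_kadecCosCoeff (hδ' j) (hx k)).mul_left (F j k)).congr_fun
      fun n => by ring)
  have hH := l2_opNorm_schur_series_le F H (c := fun n j => (kadecSinCoeff (δ j) n : ℂ))
    (u := fun n k => Complex.exp (Complex.I * ((n + 1 / 2) * x k : ℝ)))
    (hasSum_neg_one_zpow_mul_kadecSinCoeff hα')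
    (fun n j => by simpa using abs_kadecSinCoeff_le (hδ j) hα.le n)
    (fun n k => (Complex.norm_exp_I_mul_ofReal _).le)
    (fun j k => ((hasSum_kadecSinCoeff (hδ' j) (hx k)).mul_left (F j k)).congr_fun
      fun n => by ring)
  rw [hsplit, map_add, add_mul]
  exact (norm_add_le _ _).trans (add_le_add hG hH)
end

section
/- Let N be a positive integer, 0 ≤ α < 1/4, and let F̃ be the NUDFT matrix associated with a set of α-perturbed nodes x̃_{−N},…,x̃_N. Then for every vector c ∈ ℂ^{2N+1}, (1−φ_α)² ‖c‖₂² ≤ (1/(2N+1)) ‖F̃ c‖₂² ≤ (1+φ_α)² ‖c‖₂², where φ_α = 1 − cos(πα) + sin(πα). -/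
open Real Finset

/-- Orthogonality of the characters of `ℤ/M`. -/
lemma sum_exp_two_pi_mul_div (M : ℕ) (hM : 0 < M) (d : ℤ) :
    ∑ j ∈ range M, Complex.exp (2 * π * Complex.I * d * j / M) =
      if (M : ℤ) ∣ d then (M : ℂ) else 0 := by
  have hM' : (M : ℂ) ≠ 0 := by exact_mod_cast hM.ne'
  have hpow : ∀ j : ℕ, Complex.exp (2 * π * Complex.I * d * j / M) =
      Complex.exp (2 * π * Complex.I * d / M) ^ j := by
    intro j
    rw [← Complex.exp_nat_mul]
    congr 1
    ring
  simp_rw [hpow]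
  split_ifs with h
  · obtain ⟨e, rfl⟩ := h
    have : Complex.exp (2 * π * Complex.I * ((M * e : ℤ) : ℂ) / M) = 1 := by
      rw [Complex.exp_eq_one_iff]
      refine ⟨e, ?_⟩
      push_cast
      field_simp
    simp only [this, one_pow, sum_const, card_range, nsmul_eq_mul, mul_one]
  · have h1 : Complex.exp (2 * π * Complex.I * d / M) ≠ 1 := by
      rw [Ne, Complex.exp_eq_one_iff]
      rintro ⟨e, he⟩
      apply h
      refine ⟨e, ?_⟩
      have h2 : (2 * π * Complex.I : ℂ) ≠ 0 := Complex.two_pi_I_ne_zero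
      rw [div_eq_iff hM'] at he
      have : (d : ℂ) = M * e := by
        apply mul_left_cancel₀ h2
        rw [he]; ring
      exact_mod_cast this
    rw [geom_sum_eq h1, ← Complex.exp_nat_mul]
    have : Complex.exp (M * (2 * π * Complex.I * d / M)) = 1 := by
      rw [Complex.exp_eq_one_iff]
      refine ⟨d, ?_⟩
      field_simp
    simp [this]

/-- The equispaced grid on `[-π, π]` with step `π / L`. -/
noncomputable def gridPoint (L l : ℕ) : ℝ := π * l / L - π

/-- The discrete Fourier coefficient of `f` on the grid, at the frequency `m + τ`. -/
noncomputable def gridCoeff (L : ℕ) (τ : ℝ) (f : ℝ → ℂ) (m : ℕ) : ℂ :=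
  1 / (2 * L) * ∑ l ∈ range (2 * L),
    f (gridPoint L l) * Complex.exp (-(Complex.I * (m + τ) * gridPoint L l))

lemma sum_gridCoeff_mul_exp (L : ℕ) (hL : 0 < L) (τ : ℝ) (f : ℝ → ℂ) (l : ℕ)
    (hl : l < 2 * L) :
    ∑ m ∈ range (2 * L),
      gridCoeff L τ f m * Complex.exp (Complex.I * (m + τ) * gridPoint L l) =
      f (gridPoint L l) := by
  have hL' : (L : ℂ) ≠ 0 := by exact_mod_cast hL.ne'
  unfold gridCoeff
  simp_rw [mul_assoc, Finset.sum_mul, ← Finset.mul_sum]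
  rw [Finset.sum_comm]
  have key : ∀ l' ∈ range (2 * L), ∑ m ∈ range (2 * L),
      f (gridPoint L l') * Complex.exp (-(Complex.I * ((m + τ) * gridPoint L l'))) *
        Complex.exp (Complex.I * ((m + τ) * gridPoint L l)) =
      if l' = l then 2 * L * f (gridPoint L l) else 0 := by
    intro l' hl'
    have hterm : ∀ m ∈ range (2 * L),
        f (gridPoint L l') * Complex.exp (-(Complex.I * ((m + τ) * gridPoint L l'))) *
        Complex.exp (Complex.I * ((m + τ) * gridPoint L l)) =
        f (gridPoint L l') * Complex.exp (Complex.I * (τ * (gridPoint L l - gridPoint L l'))) *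
        Complex.exp (2 * π * Complex.I * ((l - l' : ℤ) : ℂ) * m / ((2 * L : ℕ) : ℂ)) := by
      intro m _
      rw [mul_assoc, mul_assoc, ← Complex.exp_add, ← Complex.exp_add]
      congr 2
      unfold gridPoint
      push_cast
      field_simp
      ring
    rw [Finset.sum_congr rfl hterm, ← Finset.mul_sum,
      sum_exp_two_pi_mul_div _ (by omega)]
    rw [mem_range] at hl'
    by_cases h : l' = l
    · subst h
      simp [mul_comm]
    · have : ¬ (((2 * L : ℕ) : ℤ) ∣ (l - l' : ℤ)) := by
        intro hd
        have := Int.eq_zero_of_abs_lt_dvd hd (by rw [abs_lt]; push_cast; omega)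
        omega
      rw [if_neg this, if_neg h, mul_zero]
  rw [Finset.sum_congr rfl key, Finset.sum_ite_eq' (range (2 * L)) l, if_pos (mem_range.2 hl)]
  field_simp

/-- The trapezoidal sum of `exp (i ν x)` over the grid. -/
lemma trapezoid_exp_mul_sin (L : ℕ) (hL : 0 < L) (ν : ℝ) :
    (∑ l ∈ range (2 * L), (Complex.exp (Complex.I * ν * gridPoint L l) +
      Complex.exp (Complex.I * ν * gridPoint L (l + 1))) / 2) * Real.sin (ν * (π / (2 * L))) =
      Real.cos (ν * (π / (2 * L))) * Real.sin (ν * π) := by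
  have hL' : (L : ℂ) ≠ 0 := by exact_mod_cast hL.ne'
  have hterm : ∀ l ∈ range (2 * L), (Complex.exp (Complex.I * ν * gridPoint L l) +
      Complex.exp (Complex.I * ν * gridPoint L (l + 1))) / 2 * Real.sin (ν * (π / (2 * L))) =
      Real.cos (ν * (π / (2 * L))) / (2 * Complex.I) *
      (Complex.exp (Complex.I * ν * gridPoint L (l + 1)) -
        Complex.exp (Complex.I * ν * gridPoint L l)) := by
    intro l _
    set t : ℂ := ν * (π / (2 * L)) with ht
    have e1 : Complex.exp (Complex.I * ν * gridPoint L (l + 1)) =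
        Complex.exp (Complex.I * ν * gridPoint L l) * (Complex.exp (t * Complex.I) *
          Complex.exp (t * Complex.I)) := by
      rw [← Complex.exp_add, ← Complex.exp_add]
      congr 1
      rw [ht]
      unfold gridPoint
      push_cast
      field_simp
      ring
    rw [e1]
    push_cast
    rw [← ht, Complex.exp_mul_I]
    have h1 := Complex.sin_sq_add_cos_sq t
    have hc : Complex.cos t ^ 2 = 1 - Complex.sin t ^ 2 := by rw [← h1]; ring
    field_simp
    ring_nf
    simp only [Complex.I_sq, Complex.I_pow_three]
    ring_nf
    rw [show Complex.cos t ^ 3 = Complex.cos t * Complex.cos t ^ 2 by ring, hc]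
    ring
  rw [Finset.sum_mul, Finset.sum_congr rfl hterm, ← Finset.mul_sum,
    Finset.sum_range_sub (fun l => Complex.exp (Complex.I * ν * gridPoint L l))]
  have e0 : Complex.I * ν * gridPoint L 0 = -((ν * π : ℝ) : ℂ) * Complex.I := by
    simp [gridPoint]; ring
  have eP : Complex.I * ν * gridPoint L (2 * L) = ((ν * π : ℝ) : ℂ) * Complex.I := by
    unfold gridPoint; push_cast; field_simp; ring
  rw [e0, eP, Complex.ofReal_sin (ν * π), Complex.sin]
  field_simp
  ring_nf
  simp only [Complex.I_sq]
  ring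

lemma sum_range_eq_trapezoid (h : ℕ → ℂ) (P : ℕ) (hP : h 0 = h P) :
    ∑ l ∈ range P, h l = ∑ l ∈ range P, (h l + h (l + 1)) / 2 := by
  have h1 := Finset.sum_range_succ h P
  rw [Finset.sum_range_succ' h P, hP] at h1
  rw [← Finset.sum_div, Finset.sum_add_distrib, add_right_cancel h1]
  ring

lemma trapezoid_exp_eq (L : ℕ) (hL : 0 < L) (ν : ℝ) (hν : Real.sin (ν * (π / (2 * L))) ≠ 0) :
    ∑ l ∈ range (2 * L), (Complex.exp (Complex.I * ν * gridPoint L l) +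
      Complex.exp (Complex.I * ν * gridPoint L (l + 1))) / 2 =
    ((Real.cos (ν * (π / (2 * L))) * Real.sin (ν * π) / Real.sin (ν * (π / (2 * L))) : ℝ) : ℂ) := by
  have h := trapezoid_exp_mul_sin L hL ν
  push_cast at h ⊢
  rw [eq_div_iff (by exact_mod_cast hν), h]

/-- The kernel `sin 2x / (sin² y - sin² x)`. -/
noncomputable def kadecKernel (y x : ℝ) : ℝ := Real.sin (2 * x) / (Real.sin y ^ 2 - Real.sin x ^ 2)

lemma sin_sub_mul_sin_add (x y : ℝ) :
    Real.sin (y - x) * Real.sin (y + x) = Real.sin y ^ 2 - Real.sin x ^ 2 := by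
  rw [Real.sin_sub, Real.sin_add]
  have h1 := Real.sin_sq_add_cos_sq x
  have h2 := Real.sin_sq_add_cos_sq y
  linear_combination Real.sin y ^ 2 * h1 - Real.sin x ^ 2 * h2

lemma cot_sub_sub_cot_add (x y : ℝ) (h1 : Real.sin (y - x) ≠ 0) (h2 : Real.sin (y + x) ≠ 0) :
    Real.cos (y - x) / Real.sin (y - x) - Real.cos (y + x) / Real.sin (y + x) =
      kadecKernel y x := by
  unfold kadecKernel
  rw [← sin_sub_mul_sin_add, div_sub_div _ _ h1 h2]
  congr 1
  rw [show 2 * x = (y + x) - (y - x) by ring, Real.sin_sub (y + x) (y - x)]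
  ring

lemma sin_grid_pos {L : ℕ} (hL : 0 < L) {ν : ℝ} (h0 : 0 < ν) (h1 : ν < 2 * L) :
    0 < Real.sin (ν * (π / (2 * L))) := by
  have hL' : (0 : ℝ) < L := by exact_mod_cast hL
  apply Real.sin_pos_of_pos_of_lt_pi
  · positivity
  · rw [mul_div_assoc', div_lt_iff₀ (by positivity)]
    nlinarith [Real.pi_pos]

lemma gridCoeff_cos (L : ℕ) (hL : 0 < L) (δ : ℝ) (hδ : |δ| < 1 / 2) (m : ℕ) (hm0 : m ≠ 0)
    (hm : m < 2 * L) :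
    gridCoeff L 0 (fun x => (Real.cos (δ * x) : ℂ)) m =
      -(-1) ^ m * ((Real.sin (δ * π) *
        kadecKernel (m * (π / (2 * L))) (δ * (π / (2 * L))) / (4 * L) : ℝ) : ℂ) := by
  have hLr : (L : ℝ) ≠ 0 := by exact_mod_cast hL.ne'
  rw [abs_lt] at hδ
  have hm1 : (1 : ℝ) ≤ m := by exact_mod_cast Nat.one_le_iff_ne_zero.2 hm0
  have hm2 : (m : ℝ) + 1 ≤ 2 * L := by exact_mod_cast hm
  have s1 := sin_grid_pos hL (ν := m - δ) (by linarith) (by linarith)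
  have s2 := sin_grid_pos hL (ν := m + δ) (by linarith) (by linarith)
  have hsum : ∀ l, (Real.cos (δ * gridPoint L l) : ℂ) *
      Complex.exp (-(Complex.I * (m + (0 : ℝ)) * gridPoint L l)) =
      (Complex.exp (Complex.I * ((δ - m : ℝ) : ℂ) * gridPoint L l) +
        Complex.exp (Complex.I * ((-δ - m : ℝ) : ℂ) * gridPoint L l)) / 2 := by
    intro l
    push_cast
    rw [Complex.cos, div_mul_eq_mul_div, add_mul, ← Complex.exp_add, ← Complex.exp_add]
    congr 3 <;> ring
  have hper : (fun l : ℕ => (Real.cos (δ * gridPoint L l) : ℂ) *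
      Complex.exp (-(Complex.I * (m + (0 : ℝ)) * gridPoint L l))) 0 =
      (fun l : ℕ => (Real.cos (δ * gridPoint L l) : ℂ) *
      Complex.exp (-(Complex.I * (m + (0 : ℝ)) * gridPoint L l))) (2 * L) := by
    have e1 : gridPoint L 0 = -π := by simp [gridPoint]
    have e2 : gridPoint L (2 * L) = π := by unfold gridPoint; push_cast; field_simp; ring
    simp only [e1, e2]
    rw [mul_neg, Real.cos_neg]
    congr 1
    rw [Complex.exp_eq_exp_iff_exists_int]
    refine ⟨m, ?_⟩
    push_cast
    ring
  unfold gridCoeff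
  rw [sum_range_eq_trapezoid _ _ hper]
  have hsplit : ∀ l ∈ range (2 * L),
      ((fun l : ℕ => (Real.cos (δ * gridPoint L l) : ℂ) *
        Complex.exp (-(Complex.I * (m + (0 : ℝ)) * gridPoint L l))) l +
      (fun l : ℕ => (Real.cos (δ * gridPoint L l) : ℂ) *
        Complex.exp (-(Complex.I * (m + (0 : ℝ)) * gridPoint L l))) (l + 1)) / 2 =
      1 / 2 * ((Complex.exp (Complex.I * ((δ - m : ℝ) : ℂ) * gridPoint L l) +
        Complex.exp (Complex.I * ((δ - m : ℝ) : ℂ) * gridPoint L (l + 1))) / 2) +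
      1 / 2 * ((Complex.exp (Complex.I * ((-δ - m : ℝ) : ℂ) * gridPoint L l) +
        Complex.exp (Complex.I * ((-δ - m : ℝ) : ℂ) * gridPoint L (l + 1))) / 2) := by
    intro l _
    simp only [hsum]
    ring
  have n1 : (δ - m) * (π / (2 * L)) = -((m - δ) * (π / (2 * L))) := by ring
  have n2 : (-δ - m) * (π / (2 * L)) = -((m + δ) * (π / (2 * L))) := by ring
  have m1 : Real.sin ((δ - m) * π) = (-1) ^ m * Real.sin (δ * π) := by
    rw [sub_mul, Real.sin_sub_nat_mul_pi]
  have m2 : Real.sin ((-δ - m) * π) = -((-1) ^ m * Real.sin (δ * π)) := by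
    rw [sub_mul, Real.sin_sub_nat_mul_pi, neg_mul, Real.sin_neg, mul_neg]
  rw [Finset.sum_congr rfl hsplit, Finset.sum_add_distrib, ← Finset.mul_sum, ← Finset.mul_sum,
    trapezoid_exp_eq L hL _ (by rw [n1, Real.sin_neg]; exact (neg_neg_of_pos s1).ne),
    trapezoid_exp_eq L hL _ (by rw [n2, Real.sin_neg]; exact (neg_neg_of_pos s2).ne)]
  rw [n1, n2, m1, m2, Real.cos_neg, Real.cos_neg, Real.sin_neg, Real.sin_neg]
  have a1 : (m - δ) * (π / (2 * L)) = m * (π / (2 * L)) - δ * (π / (2 * L)) := by ring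
  have a2 : (m + δ) * (π / (2 * L)) = m * (π / (2 * L)) + δ * (π / (2 * L)) := by ring
  rw [← cot_sub_sub_cot_add _ _ (by rw [← a1]; exact s1.ne') (by rw [← a2]; exact s2.ne'),
    ← a1, ← a2]
  simp only [Complex.ofReal_mul, Complex.ofReal_div, Complex.ofReal_neg, Complex.ofReal_sub,
    Complex.ofReal_pow, Complex.ofReal_one, Complex.ofReal_natCast, Complex.ofReal_ofNat]
  ring

lemma gridCoeff_sin (L : ℕ) (hL : 0 < L) (δ : ℝ) (hδ : |δ| < 1 / 2) (m : ℕ)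
    (hm : m < 2 * L) :
    gridCoeff L (1 / 2) (fun x => Complex.I * (Real.sin (δ * x) : ℂ)) m =
      (-1) ^ m * ((Real.cos (δ * π) *
        kadecKernel ((m + 1 / 2) * (π / (2 * L))) (δ * (π / (2 * L))) / (4 * L) : ℝ) : ℂ) := by
  have hLr : (L : ℝ) ≠ 0 := by exact_mod_cast hL.ne'
  rw [abs_lt] at hδ
  have hm1 : (0 : ℝ) ≤ m := by positivity
  have hm2 : (m : ℝ) + 1 ≤ 2 * L := by exact_mod_cast hm
  have s1 := sin_grid_pos hL (ν := m + 1 / 2 - δ) (by linarith) (by linarith)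
  have s2 := sin_grid_pos hL (ν := m + 1 / 2 + δ) (by linarith) (by linarith)
  have hsum : ∀ l, Complex.I * (Real.sin (δ * gridPoint L l) : ℂ) *
      Complex.exp (-(Complex.I * (m + (1 / 2 : ℝ)) * gridPoint L l)) =
      (Complex.exp (Complex.I * ((δ - (m + 1 / 2) : ℝ) : ℂ) * gridPoint L l) -
        Complex.exp (Complex.I * ((-δ - (m + 1 / 2) : ℝ) : ℂ) * gridPoint L l)) / 2 := by
    intro l
    have hI : Complex.I * (Real.sin (δ * gridPoint L l) : ℂ) =
        (Complex.exp ((δ * gridPoint L l : ℝ) * Complex.I) -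
          Complex.exp (-(δ * gridPoint L l : ℝ) * Complex.I)) / 2 := by
      rw [Complex.ofReal_sin, Complex.sin]
      linear_combination (Complex.exp (-(δ * gridPoint L l : ℝ) * Complex.I) -
        Complex.exp ((δ * gridPoint L l : ℝ) * Complex.I)) / 2 * Complex.I_sq
    rw [hI, div_mul_eq_mul_div, sub_mul, ← Complex.exp_add, ← Complex.exp_add]
    push_cast
    congr 3 <;> ring
  have hper : (fun l : ℕ => Complex.I * (Real.sin (δ * gridPoint L l) : ℂ) *
      Complex.exp (-(Complex.I * (m + (1 / 2 : ℝ)) * gridPoint L l))) 0 =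
      (fun l : ℕ => Complex.I * (Real.sin (δ * gridPoint L l) : ℂ) *
      Complex.exp (-(Complex.I * (m + (1 / 2 : ℝ)) * gridPoint L l))) (2 * L) := by
    have e1 : gridPoint L 0 = -π := by simp [gridPoint]
    have e2 : gridPoint L (2 * L) = π := by unfold gridPoint; push_cast; field_simp; ring
    simp only [e1, e2]
    have e3 : Complex.exp (-(Complex.I * (m + (1 / 2 : ℝ)) * (-π : ℝ))) =
        -Complex.exp (-(Complex.I * (m + (1 / 2 : ℝ)) * π)) := by
      rw [← Complex.exp_sub_pi_mul_I, Complex.exp_eq_exp_iff_exists_int]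
      refine ⟨m + 1, ?_⟩
      push_cast
      ring
    rw [e3, mul_neg, mul_neg δ, Real.sin_neg]
    push_cast
    ring
  unfold gridCoeff
  rw [sum_range_eq_trapezoid _ _ hper]
  have hsplit : ∀ l ∈ range (2 * L),
      ((fun l : ℕ => Complex.I * (Real.sin (δ * gridPoint L l) : ℂ) *
        Complex.exp (-(Complex.I * (m + (1 / 2 : ℝ)) * gridPoint L l))) l +
      (fun l : ℕ => Complex.I * (Real.sin (δ * gridPoint L l) : ℂ) *
        Complex.exp (-(Complex.I * (m + (1 / 2 : ℝ)) * gridPoint L l))) (l + 1)) / 2 =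
      1 / 2 * ((Complex.exp (Complex.I * ((δ - (m + 1 / 2) : ℝ) : ℂ) * gridPoint L l) +
        Complex.exp (Complex.I * ((δ - (m + 1 / 2) : ℝ) : ℂ) * gridPoint L (l + 1))) / 2) -
      1 / 2 * ((Complex.exp (Complex.I * ((-δ - (m + 1 / 2) : ℝ) : ℂ) * gridPoint L l) +
        Complex.exp (Complex.I * ((-δ - (m + 1 / 2) : ℝ) : ℂ) * gridPoint L (l + 1))) / 2) := by
    intro l _
    simp only [hsum]
    ring
  have n1 : (δ - (m + 1 / 2)) * (π / (2 * L)) = -((m + 1 / 2 - δ) * (π / (2 * L))) := by ring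
  have n2 : (-δ - (m + 1 / 2)) * (π / (2 * L)) = -((m + 1 / 2 + δ) * (π / (2 * L))) := by ring
  have m1 : Real.sin ((δ - (m + 1 / 2)) * π) = -((-1) ^ m * Real.cos (δ * π)) := by
    rw [show (δ - (m + 1 / 2)) * π = δ * π - π / 2 - m * π by ring, Real.sin_sub_nat_mul_pi,
      Real.sin_sub_pi_div_two, mul_neg]
  have m2 : Real.sin ((-δ - (m + 1 / 2)) * π) = -((-1) ^ m * Real.cos (δ * π)) := by
    rw [show (-δ - (m + 1 / 2)) * π = -(δ * π) - π / 2 - m * π by ring, Real.sin_sub_nat_mul_pi,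
      Real.sin_sub_pi_div_two, Real.cos_neg, mul_neg]
  rw [Finset.sum_congr rfl hsplit, Finset.sum_sub_distrib, ← Finset.mul_sum, ← Finset.mul_sum,
    trapezoid_exp_eq L hL _ (by rw [n1, Real.sin_neg]; exact (neg_neg_of_pos s1).ne),
    trapezoid_exp_eq L hL _ (by rw [n2, Real.sin_neg]; exact (neg_neg_of_pos s2).ne)]
  rw [n1, n2, m1, m2, Real.cos_neg, Real.cos_neg, Real.sin_neg, Real.sin_neg]
  have a1 : (m + 1 / 2 - δ) * (π / (2 * L)) =
      (m + 1 / 2) * (π / (2 * L)) - δ * (π / (2 * L)) := by ring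
  have a2 : (m + 1 / 2 + δ) * (π / (2 * L)) =
      (m + 1 / 2) * (π / (2 * L)) + δ * (π / (2 * L)) := by ring
  rw [← cot_sub_sub_cot_add _ _ (by rw [← a1]; exact s1.ne') (by rw [← a2]; exact s2.ne'),
    ← a1, ← a2]
  simp only [Complex.ofReal_mul, Complex.ofReal_div, Complex.ofReal_neg, Complex.ofReal_sub,
    Complex.ofReal_pow, Complex.ofReal_one, Complex.ofReal_natCast, Complex.ofReal_ofNat]
  ring

lemma gridCoeff_sub (L : ℕ) (τ : ℝ) (f g : ℝ → ℂ) (m : ℕ) :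
    gridCoeff L τ (fun x => f x - g x) m = gridCoeff L τ f m - gridCoeff L τ g m := by
  unfold gridCoeff
  rw [← mul_sub, ← Finset.sum_sub_distrib]
  simp only [sub_mul]

/-- Absolute values of the coefficients of `1 - cos (δ x)`, for `δ ≥ 0`. -/
noncomputable def cosWeight (L : ℕ) (δ : ℝ) (m : ℕ) : ℝ :=
  if m = 0 then 1 / (2 * L) * ∑ l ∈ range (2 * L), (1 - Real.cos (δ * gridPoint L l))
  else Real.sin (δ * π) * kadecKernel (m * (π / (2 * L))) (δ * (π / (2 * L))) / (4 * L)

/-- Absolute values of the coefficients of `sin (δ x)`, for `0 ≤ δ ≤ 1/2`. -/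
noncomputable def sinWeight (L : ℕ) (δ : ℝ) (m : ℕ) : ℝ :=
  Real.cos (δ * π) * kadecKernel ((m + 1 / 2) * (π / (2 * L))) (δ * (π / (2 * L))) / (4 * L)

lemma gridCoeff_cos_sub_one (L : ℕ) (hL : 0 < L) (δ : ℝ) (hδ : |δ| < 1 / 2) (m : ℕ)
    (hm : m < 2 * L) :
    gridCoeff L 0 (fun x => (Real.cos (δ * x) : ℂ) - 1) m = -(-1) ^ m * (cosWeight L δ m : ℂ) := by
  by_cases hm0 : m = 0
  · subst hm0
    simp [gridCoeff, cosWeight]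
    ring
  · have h1 := gridCoeff_cos L hL 0 (by norm_num) m hm0 hm
    simp only [zero_mul, Real.cos_zero, Real.sin_zero, zero_div, Complex.ofReal_zero, mul_zero,
      Complex.ofReal_one] at h1
    rw [gridCoeff_sub, h1, gridCoeff_cos L hL δ hδ m hm0 hm, cosWeight, if_neg hm0, sub_zero]

lemma kadecKernel_neg (y x : ℝ) : kadecKernel y (-x) = -kadecKernel y x := by
  unfold kadecKernel
  rw [mul_neg, Real.sin_neg, Real.sin_neg, neg_sq, neg_div]

lemma cosWeight_neg (L : ℕ) (δ : ℝ) (m : ℕ) : cosWeight L (-δ) m = cosWeight L δ m := by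
  simp [cosWeight, kadecKernel_neg]

lemma sinWeight_neg (L : ℕ) (δ : ℝ) (m : ℕ) : sinWeight L (-δ) m = -sinWeight L δ m := by
  simp only [sinWeight, neg_mul, kadecKernel_neg, Real.cos_neg]
  ring

lemma abs_gridPoint_le {L l : ℕ} (hL : 0 < L) (hl : l < 2 * L) : |gridPoint L l| ≤ π := by
  have hL' : (0 : ℝ) < L := by exact_mod_cast hL
  have hl' : (l : ℝ) ≤ 2 * L := by exact_mod_cast hl.le
  unfold gridPoint
  rw [abs_le]
  constructor
  · have : 0 ≤ π * l / L := by positivity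
    linarith
  · have : π * l / L ≤ 2 * π := by
      rw [div_le_iff₀ hL']
      nlinarith [Real.pi_pos]
    linarith

/-- Positivity and monotonicity of the denominators of the weights. -/
lemma sin_sq_sub_sin_sq_bounds {L : ℕ} (hL : 0 < L) {δ α ν : ℝ} (hδ0 : 0 ≤ δ) (hδ : δ ≤ α)
    (hα : α ≤ 1 / 4) (hν : 1 / 2 ≤ ν) (hν' : ν + 1 / 2 ≤ 2 * L) :
    0 < Real.sin (ν * (π / (2 * L))) ^ 2 - Real.sin (α * (π / (2 * L))) ^ 2 ∧
    Real.sin (ν * (π / (2 * L))) ^ 2 - Real.sin (α * (π / (2 * L))) ^ 2 ≤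
      Real.sin (ν * (π / (2 * L))) ^ 2 - Real.sin (δ * (π / (2 * L))) ^ 2 := by
  have hL' : (1 : ℝ) ≤ L := by exact_mod_cast hL
  have hθ : 0 < π / (2 * L) := by positivity
  constructor
  · rw [← sin_sub_mul_sin_add, ← sub_mul, ← add_mul]
    exact mul_pos (sin_grid_pos hL (by linarith) (by linarith))
      (sin_grid_pos hL (by linarith) (by linarith))
  · have h0 : 0 ≤ Real.sin (δ * (π / (2 * L))) := by
      rcases hδ0.eq_or_lt with h | h
      · simp [← h]
      · exact (sin_grid_pos hL h (by linarith)).le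
    have hle : π / (2 * L) ≤ π := div_le_self Real.pi_pos.le (by linarith)
    have h1 : Real.sin (δ * (π / (2 * L))) ≤ Real.sin (α * (π / (2 * L))) := by
      apply Real.sin_le_sin_of_le_of_le_pi_div_two
      · nlinarith [Real.pi_pos, mul_nonneg hδ0 hθ.le]
      · nlinarith [Real.pi_pos]
      · exact mul_le_mul_of_nonneg_right hδ hθ.le
    have := pow_le_pow_left₀ h0 h1 2
    linarith

lemma cos_mul_sin_le {L : ℕ} (hL : 2 ≤ L) {s t : ℝ} (hs : 0 ≤ s) (hst : s ≤ t)
    (ht : L * t ≤ π / 4) :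
    Real.cos (L * s) * Real.sin s ≤ Real.cos (L * t) * Real.sin t := by
  have hL' : (2 : ℝ) ≤ L := by exact_mod_cast hL
  have hderiv : ∀ x : ℝ, HasDerivAt (fun x : ℝ => Real.cos (L * x) * Real.sin x)
      (-Real.sin (L * x) * (L * 1) * Real.sin x + Real.cos (L * x) * Real.cos x) x := fun x =>
    (((hasDerivAt_id x).const_mul (L : ℝ)).cos).mul (Real.hasDerivAt_sin x)
  have hmono : MonotoneOn (fun x : ℝ => Real.cos (L * x) * Real.sin x) (Set.Icc 0 t) := by
    apply monotoneOn_of_deriv_nonneg (convex_Icc 0 t)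
    · exact fun x _ => (hderiv x).continuousAt.continuousWithinAt
    · exact fun x _ => (hderiv x).differentiableAt.differentiableWithinAt
    · intro x hx
      rw [interior_Icc] at hx
      rw [(hderiv x).deriv]
      have hx0 := hx.1
      have hLx : L * x ≤ π / 4 := le_trans (by nlinarith [hx.2]) ht
      have hLx0 : 0 < L * x := by positivity
      have hpi := Real.pi_lt_d2
      have hpi' := Real.pi_gt_three
      have hx8 : x ≤ 0.4 := by nlinarith
      have h1 : Real.sin (L * x) ≤ Real.cos (L * x) := by
        rw [← Real.sin_pi_div_two_sub]
        exact Real.sin_le_sin_of_le_of_le_pi_div_two (by linarith) (by linarith) (by linarith)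
      have h2 : L * Real.sin x ≤ Real.cos x := by
        have := Real.sin_le hx0.le
        have := Real.one_sub_sq_div_two_le_cos (x := x)
        nlinarith
      have h3 : 0 ≤ Real.sin (L * x) :=
        Real.sin_nonneg_of_nonneg_of_le_pi hLx0.le (by linarith)
      have h4 : 0 ≤ L * Real.sin x :=
        mul_nonneg (by positivity) (Real.sin_nonneg_of_nonneg_of_le_pi hx0.le (by linarith))
      have := mul_le_mul h1 h2 h4 (h3.trans h1)
      linarith
  exact hmono ⟨hs, hst⟩ ⟨hs.trans hst, le_rfl⟩ hst

lemma cosWeight_bounds {L : ℕ} (hL : 0 < L) {δ α : ℝ} (hδ0 : 0 ≤ δ) (hδ : δ ≤ α)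
    (hα : α ≤ 1 / 4) {m : ℕ} (hm : m < 2 * L) :
    0 ≤ cosWeight L δ m ∧ cosWeight L δ m ≤ cosWeight L α m := by
  have hL' : (1 : ℝ) ≤ L := by exact_mod_cast hL
  have hpi := Real.pi_pos
  by_cases hm0 : m = 0
  · simp only [cosWeight, if_pos hm0]
    constructor
    · exact mul_nonneg (by positivity)
        (Finset.sum_nonneg fun l _ => sub_nonneg.2 (Real.cos_le_one _))
    · gcongr with l hl
      have hx := abs_gridPoint_le hL (mem_range.1 hl)
      rw [← Real.cos_abs (α * _), ← Real.cos_abs (δ * _), abs_mul, abs_mul, abs_of_nonneg hδ0,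
        abs_of_nonneg (hδ0.trans hδ)]
      apply Real.cos_le_cos_of_nonneg_of_le_pi (by positivity)
      · nlinarith [abs_nonneg (gridPoint L l)]
      · gcongr
  · have hm1 : (1 : ℝ) ≤ m := by exact_mod_cast Nat.one_le_iff_ne_zero.2 hm0
    have hm2 : (m : ℝ) + 1 ≤ 2 * L := by exact_mod_cast hm
    obtain ⟨d1, d2⟩ := sin_sq_sub_sin_sq_bounds hL hδ0 hδ hα (ν := m) (by linarith) (by linarith)
    have hθ : 0 < π / (2 * L) := by positivity
    have hle : π / (2 * L) ≤ π / 2 := by gcongr; linarith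
    simp only [cosWeight, if_neg hm0, kadecKernel]
    have a1 : 0 ≤ Real.sin (δ * π) :=
      Real.sin_nonneg_of_nonneg_of_le_pi (by positivity) (by nlinarith)
    have a2 : Real.sin (δ * π) ≤ Real.sin (α * π) :=
      Real.sin_le_sin_of_le_of_le_pi_div_two (by nlinarith) (by nlinarith) (by nlinarith)
    have b1 : 0 ≤ Real.sin (2 * (δ * (π / (2 * L)))) :=
      Real.sin_nonneg_of_nonneg_of_le_pi (by positivity) (by nlinarith)
    have b2 : Real.sin (2 * (δ * (π / (2 * L)))) ≤ Real.sin (2 * (α * (π / (2 * L)))) :=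
      Real.sin_le_sin_of_le_of_le_pi_div_two (by nlinarith [mul_nonneg hδ0 hθ.le])
        (by nlinarith) (by nlinarith)
    constructor
    · exact div_nonneg (mul_nonneg a1 (div_nonneg b1 (d1.le.trans d2))) (by positivity)
    · have h1 := div_le_div₀ (b1.trans b2) b2 d1 d2
      have h2 := mul_le_mul a2 h1 (div_nonneg b1 (d1.le.trans d2)) (a1.trans a2)
      gcongr

lemma sinWeight_bounds {L : ℕ} (hL : 2 ≤ L) {δ α : ℝ} (hδ0 : 0 ≤ δ) (hδ : δ ≤ α)
    (hα : α ≤ 1 / 4) {m : ℕ} (hm : m < 2 * L) :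
    0 ≤ sinWeight L δ m ∧ sinWeight L δ m ≤ sinWeight L α m := by
  have hL' : (2 : ℝ) ≤ L := by exact_mod_cast hL
  have hpi := Real.pi_pos
  have hm1 : (0 : ℝ) ≤ m := by positivity
  have hm2 : (m : ℝ) + 1 ≤ 2 * L := by exact_mod_cast hm
  obtain ⟨d1, d2⟩ := sin_sq_sub_sin_sq_bounds (L := L) (by omega) hδ0 hδ hα (ν := m + 1 / 2)
    (by linarith) (by linarith)
  have hθ : 0 < π / (2 * L) := by positivity
  have hle : π / (2 * L) ≤ π / 4 := by gcongr; linarith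
  simp only [sinWeight, kadecKernel]
  rw [← mul_div_assoc (Real.cos (δ * π)), ← mul_div_assoc (Real.cos (α * π))]
  have a1 : 0 ≤ Real.cos (δ * π) :=
    Real.cos_nonneg_of_neg_pi_div_two_le_of_le (by nlinarith) (by nlinarith)
  have b1 : 0 ≤ Real.sin (2 * (δ * (π / (2 * L)))) :=
    Real.sin_nonneg_of_nonneg_of_le_pi (by positivity) (by nlinarith)
  have hmul : ∀ β : ℝ, β * π = L * (2 * (β * (π / (2 * L)))) := by
    intro β
    field_simp
  have key : Real.cos (δ * π) * Real.sin (2 * (δ * (π / (2 * L)))) ≤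
      Real.cos (α * π) * Real.sin (2 * (α * (π / (2 * L)))) := by
    rw [hmul δ, hmul α]
    apply cos_mul_sin_le hL (by positivity) (by gcongr)
    rw [← hmul]
    nlinarith
  constructor
  · exact div_nonneg (div_nonneg (mul_nonneg a1 b1) (d1.le.trans d2)) (by positivity)
  · have h1 := div_le_div₀ ((mul_nonneg a1 b1).trans key) key d1 d2
    exact div_le_div_of_nonneg_right h1 (by positivity)

lemma abs_cosWeight_le {L : ℕ} (hL : 0 < L) {δ α : ℝ} (hδ : |δ| ≤ α)
    (hα : α ≤ 1 / 4) {m : ℕ} (hm : m < 2 * L) :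
    |cosWeight L δ m| ≤ cosWeight L α m := by
  have h := cosWeight_bounds hL (abs_nonneg δ) hδ hα hm
  rcases abs_choice δ with e | e <;> rw [e] at h
  · rw [abs_of_nonneg h.1]; exact h.2
  · rw [cosWeight_neg] at h
    rw [abs_of_nonneg h.1]; exact h.2

lemma abs_sinWeight_le {L : ℕ} (hL : 2 ≤ L) {δ α : ℝ} (hδ : |δ| ≤ α)
    (hα : α ≤ 1 / 4) {m : ℕ} (hm : m < 2 * L) :
    |sinWeight L δ m| ≤ sinWeight L α m := by
  have h := sinWeight_bounds hL (abs_nonneg δ) hδ hα hm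
  rcases abs_choice δ with e | e <;> rw [e] at h
  · rw [abs_of_nonneg h.1]; exact h.2
  · rw [sinWeight_neg] at h
    rw [← abs_neg, abs_of_nonneg h.1]; exact h.2

lemma sum_cosWeight (L : ℕ) (hL : 0 < L) (α : ℝ) (hα : |α| < 1 / 2) :
    ∑ m ∈ range (2 * L), cosWeight L α m = 1 - Real.cos (π * α) := by
  have h := sum_gridCoeff_mul_exp L hL 0 (fun x => (Real.cos (α * x) : ℂ) - 1) 0 (by omega)
  have e1 : gridPoint L 0 = -π := by simp [gridPoint]
  have hterm : ∀ m ∈ range (2 * L), gridCoeff L 0 (fun x => (Real.cos (α * x) : ℂ) - 1) m *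
      Complex.exp (Complex.I * (m + (0 : ℝ)) * gridPoint L 0) = -((cosWeight L α m : ℝ) : ℂ) := by
    intro m hm
    have e2 : Complex.exp (Complex.I * (m + (0 : ℝ)) * gridPoint L 0) = (-1) ^ m := by
      rw [e1, ← Complex.exp_neg_pi_mul_I, ← Complex.exp_nat_mul]
      congr 1
      push_cast
      ring
    rw [e2, gridCoeff_cos_sub_one L hL α hα m (mem_range.1 hm)]
    have : ((-1 : ℂ) ^ m) * (-1) ^ m = 1 := by rw [← mul_pow]; simp
    linear_combination -(cosWeight L α m : ℂ) * this
  rw [Finset.sum_congr rfl hterm, e1, mul_neg, Real.cos_neg, mul_comm α] at h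
  have h' : ((-∑ m ∈ range (2 * L), cosWeight L α m : ℝ) : ℂ) =
      ((Real.cos (π * α) - 1 : ℝ) : ℂ) := by
    rw [Complex.ofReal_sub, Complex.ofReal_one, ← h]
    push_cast
    rw [Finset.sum_neg_distrib]
  have := Complex.ofReal_injective h'
  linarith

lemma sum_sinWeight (L : ℕ) (hL : 0 < L) (α : ℝ) (hα : |α| < 1 / 2) :
    ∑ m ∈ range (2 * L), sinWeight L α m = Real.sin (π * α) := by
  have h := sum_gridCoeff_mul_exp L hL (1 / 2)
    (fun x => Complex.I * (Real.sin (α * x) : ℂ)) 0 (by omega)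
  have e1 : gridPoint L 0 = -π := by simp [gridPoint]
  have hterm : ∀ m ∈ range (2 * L),
      gridCoeff L (1 / 2) (fun x => Complex.I * (Real.sin (α * x) : ℂ)) m *
      Complex.exp (Complex.I * (m + (1 / 2 : ℝ)) * gridPoint L 0) =
      -Complex.I * ((sinWeight L α m : ℝ) : ℂ) := by
    intro m hm
    have e2 : Complex.exp (Complex.I * (m + (1 / 2 : ℝ)) * gridPoint L 0) =
        (-1) ^ m * -Complex.I := by
      rw [e1, ← Complex.exp_neg_pi_mul_I, ← Complex.exp_nat_mul,
        ← Complex.exp_neg_pi_div_two_mul_I, ← Complex.exp_add]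
      congr 1
      push_cast
      ring
    have hs : gridCoeff L (1 / 2) (fun x => Complex.I * (Real.sin (α * x) : ℂ)) m =
        (-1) ^ m * (sinWeight L α m : ℂ) := gridCoeff_sin L hL α hα m (mem_range.1 hm)
    rw [e2, hs]
    have : ((-1 : ℂ) ^ m) * (-1) ^ m = 1 := by rw [← mul_pow]; simp
    linear_combination -Complex.I * (sinWeight L α m : ℂ) * this
  rw [Finset.sum_congr rfl hterm, e1, mul_neg, Real.sin_neg, mul_comm α, ← Finset.mul_sum,
    Complex.ofReal_neg, mul_neg, neg_mul, neg_inj] at h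
  have := mul_left_cancel₀ Complex.I_ne_zero h
  exact_mod_cast this

/-- Kadec expansion of `exp (i δ x) - 1` on the grid. -/
lemma exp_sub_one_eq_sum (L : ℕ) (hL : 0 < L) (δ : ℝ) (l : ℕ) (hl : l < 2 * L) :
    Complex.exp (Complex.I * δ * gridPoint L l) - 1 =
    ∑ m ∈ range (2 * L), gridCoeff L 0 (fun x => (Real.cos (δ * x) : ℂ) - 1) m *
      Complex.exp (Complex.I * (m + (0 : ℝ)) * gridPoint L l) +
    ∑ m ∈ range (2 * L), gridCoeff L (1 / 2) (fun x => Complex.I * (Real.sin (δ * x) : ℂ)) m *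
      Complex.exp (Complex.I * (m + (1 / 2 : ℝ)) * gridPoint L l) := by
  rw [sum_gridCoeff_mul_exp L hL _ _ l hl, sum_gridCoeff_mul_exp L hL _ _ l hl,
    show Complex.I * δ * gridPoint L l = ((δ * gridPoint L l : ℝ) : ℂ) * Complex.I by
      push_cast; ring, Complex.exp_mul_I, Complex.ofReal_cos, Complex.ofReal_sin]
  ring

lemma norm_gridCoeff_cos_le {L : ℕ} (hL : 0 < L) {δ α : ℝ} (hδ : |δ| ≤ α) (hα : α ≤ 1 / 4)
    {m : ℕ} (hm : m < 2 * L) :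
    ‖gridCoeff L 0 (fun x => (Real.cos (δ * x) : ℂ) - 1) m‖ ≤ cosWeight L α m := by
  rw [gridCoeff_cos_sub_one L hL δ (by linarith) m hm]
  simpa using abs_cosWeight_le hL hδ hα hm

lemma norm_gridCoeff_sin_le {L : ℕ} (hL : 2 ≤ L) {δ α : ℝ} (hδ : |δ| ≤ α) (hα : α ≤ 1 / 4)
    {m : ℕ} (hm : m < 2 * L) :
    ‖gridCoeff L (1 / 2) (fun x => Complex.I * (Real.sin (δ * x) : ℂ)) m‖ ≤ sinWeight L α m := by
  have hs : gridCoeff L (1 / 2) (fun x => Complex.I * (Real.sin (δ * x) : ℂ)) m =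
      (-1) ^ m * (sinWeight L δ m : ℂ) := gridCoeff_sin L (by omega) δ (by linarith) m hm
  rw [hs]
  simpa using abs_sinWeight_le hL hδ hα hm

/-- Parseval's identity for the discrete Fourier transform with shifted indices. -/
lemma sum_norm_sq_dft (M : ℕ) (hM : 0 < M) (a b : ℝ) (c : Fin M → ℂ) :
    ∑ j : Fin M, ‖∑ k : Fin M, Complex.exp (-Complex.I *
      ((((j : ℕ) - a) * (2 * π / M) : ℝ) : ℂ) * (((k : ℕ) - b : ℝ) : ℂ)) * c k‖ ^ 2 =
      M * ∑ k, ‖c k‖ ^ 2 := by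
  apply Complex.ofReal_injective
  push_cast
  simp_rw [← Complex.conj_mul', map_sum, Finset.sum_mul_sum]
  rw [Finset.sum_comm, Finset.mul_sum]
  refine Finset.sum_congr rfl fun k _ => ?_
  rw [Finset.sum_comm]
  have key : ∀ k' : Fin M, ∑ j : Fin M, (starRingEnd ℂ) (Complex.exp (-Complex.I *
      (((j : ℕ) - a) * (2 * π / M)) * ((k : ℕ) - b)) * c k) *
      (Complex.exp (-Complex.I * (((j : ℕ) - a) * (2 * π / M)) * ((k' : ℕ) - b)) * c k') =
      if k' = k then M * ((starRingEnd ℂ) (c k) * c k) else 0 := by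
    intro k'
    have hterm : ∀ j : Fin M, (starRingEnd ℂ) (Complex.exp (-Complex.I *
      (((j : ℕ) - a) * (2 * π / M)) * ((k : ℕ) - b)) * c k) *
      (Complex.exp (-Complex.I * (((j : ℕ) - a) * (2 * π / M)) * ((k' : ℕ) - b)) * c k') =
      (starRingEnd ℂ) (c k) * c k' * Complex.exp (-Complex.I * a * (2 * π / M) * (k - k')) *
      Complex.exp (2 * π * Complex.I * ((k - k' : ℤ) : ℂ) * (j : ℕ) / M) := by
      intro j
      have e : Complex.exp (Complex.I * (((j : ℕ) - a) * (2 * π / M)) * ((k : ℕ) - b)) *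
          Complex.exp (-Complex.I * (((j : ℕ) - a) * (2 * π / M)) * ((k' : ℕ) - b)) =
          Complex.exp (-Complex.I * a * (2 * π / M) * (k - k')) *
          Complex.exp (2 * π * Complex.I * ((k - k' : ℤ) : ℂ) * (j : ℕ) / M) := by
        rw [← Complex.exp_add, ← Complex.exp_add]
        congr 1
        push_cast
        ring
      rw [mul_assoc ((starRingEnd ℂ) (c k) * c k'), ← e, map_mul, ← Complex.exp_conj]
      simp only [map_mul, map_sub, map_neg, map_div₀, Complex.conj_I, Complex.conj_ofReal,
        map_natCast, map_ofNat, neg_neg]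
      ring
    simp_rw [hterm]
    rw [← Finset.mul_sum, Fin.sum_univ_eq_sum_range
      (fun j => Complex.exp (2 * π * Complex.I * ((k - k' : ℤ) : ℂ) * j / M)),
      sum_exp_two_pi_mul_div _ hM]
    by_cases h : k' = k
    · subst h
      simp
      ring
    · have : ¬ ((M : ℤ) ∣ (k - k' : ℤ)) := by
        intro hd
        have := Int.eq_zero_of_abs_lt_dvd hd (by rw [abs_lt]; omega)
        apply h
        ext
        omega
      rw [if_neg this, if_neg h, mul_zero]
  rw [Finset.sum_congr rfl fun k' _ => key k', Finset.sum_ite_eq' Finset.univ k,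
    if_pos (mem_univ k)]

/-- The `ℓ²` norm of a combination `∑ r, C r j * y r j` with coefficients bounded in `j`. -/
lemma norm_toLp_sum_mul_le {κ ι : Type*} [Fintype κ] (s : Finset ι) (w : ι → ℝ) (B : ℝ)
    (C y : ι → κ → ℂ) (hC : ∀ r ∈ s, ∀ j, ‖C r j‖ ≤ w r) (hw : ∀ r ∈ s, 0 ≤ w r)
    (hy : ∀ r ∈ s, ‖WithLp.toLp 2 (y r)‖ ≤ B) :
    ‖WithLp.toLp 2 (fun j => ∑ r ∈ s, C r j * y r j)‖ ≤ (∑ r ∈ s, w r) * B := by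
  have h : WithLp.toLp 2 (fun j => ∑ r ∈ s, C r j * y r j) =
      ∑ r ∈ s, WithLp.toLp 2 (fun j => C r j * y r j) := by
    rw [← WithLp.toLp_sum]
    congr 1
    ext j
    simp
  rw [h, Finset.sum_mul]
  refine (norm_sum_le _ _).trans (Finset.sum_le_sum fun r hr => ?_)
  refine le_trans ?_ (mul_le_mul_of_nonneg_left (hy r hr) (hw r hr))
  rw [EuclideanSpace.norm_eq, EuclideanSpace.norm_eq, ← Real.sqrt_sq (hw r hr),
    ← Real.sqrt_mul (sq_nonneg _), Finset.mul_sum]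
  refine Real.sqrt_le_sqrt (Finset.sum_le_sum fun j _ => ?_)
  simp only [norm_mul, mul_pow]
  gcongr
  exact hC r hr j

/-- Kadec frame inequalities for the `L`-point NUDFT, with `L` odd. -/
lemma nudft_frame_inequalities_of_eq (N : ℕ) (hN : 0 < N) (L : ℕ) (hLdef : L = 2 * N + 1)
    (α : ℝ) (hα0 : 0 ≤ α) (hα : α < 1 / 4) (xt : Fin L → ℝ)
    (hxt : ∀ j, |xt j - (((j : ℕ) : ℝ) - (N : ℝ)) * (2 * π / L)| ≤ α * (2 * π / L))
    (Ftil : Matrix (Fin L) (Fin L) ℂ)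
    (hFtil : ∀ j k, Ftil j k =
      Complex.exp (-Complex.I * (xt j : ℂ) * (((k : ℕ) : ℂ) - (N : ℂ))))
    (c : Fin L → ℂ) :
    (1 - (1 - Real.cos (π * α) + Real.sin (π * α))) ^ 2 * ∑ k, ‖c k‖ ^ 2 ≤
        (1 / (L : ℝ)) * ∑ j, ‖Ftil.mulVec c j‖ ^ 2 ∧
    (1 / (L : ℝ)) * ∑ j, ‖Ftil.mulVec c j‖ ^ 2 ≤
        (1 + (1 - Real.cos (π * α) + Real.sin (π * α))) ^ 2 * ∑ k, ‖c k‖ ^ 2 := by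
  have hL : 0 < L := by omega
  have hL2 : 2 ≤ L := by omega
  have hLR : (L : ℝ) = 2 * N + 1 := by rw [hLdef]; push_cast; ring
  have hL' : (0 : ℝ) < L := by exact_mod_cast hL
  -- the unperturbed transform and its Parseval identity
  let F : (Fin L → ℂ) → Fin L → ℂ := fun v j => ∑ k : Fin L, Complex.exp (-Complex.I *
      ((((j : ℕ) - N) * (2 * π / L) : ℝ) : ℂ) * (((k : ℕ) - N : ℝ) : ℂ)) * v k
  have hF : ∀ v, ‖WithLp.toLp 2 (F v)‖ = √(L * ∑ k, ‖v k‖ ^ 2) := fun v => by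
    rw [EuclideanSpace.norm_eq, ← sum_norm_sq_dft L hL N N v]
  set B : ℝ := √(L * ∑ k, ‖c k‖ ^ 2) with hB
  have hB0 : 0 ≤ B := Real.sqrt_nonneg _
  let x : Fin L → ℝ := fun k => gridPoint L (2 * k + 1)
  have hx : ∀ k : Fin L, x k = ((k : ℕ) - N) * (2 * π / L) := by
    intro k
    simp only [x, gridPoint]
    field_simp
    rw [hLR]
    push_cast
    ring
  let D : ℝ → ℕ → Fin L → ℂ := fun τ m k => Complex.exp (Complex.I * (m + τ) * x k) * c k
  have hD : ∀ τ m, ‖WithLp.toLp 2 (F (D τ m))‖ ≤ B := by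
    intro τ m
    rw [hF]
    refine le_of_eq ?_
    congr 3 with k
    have : Complex.I * (m + τ) * x k = (((m + τ) * x k : ℝ) : ℂ) * Complex.I := by
      push_cast; ring
    simp only [D]
    rw [norm_mul, this, Complex.norm_exp_ofReal_mul_I, one_mul]
  -- `δ` is minus the relative perturbation
  let δ : Fin L → ℝ := fun j => -((xt j - ((j : ℕ) - N) * (2 * π / L)) / (2 * π / L))
  have hstep : 0 < 2 * π / L := by positivity
  have hδ : ∀ j, |δ j| ≤ α := by
    intro j
    simp only [δ]
    rw [abs_neg, abs_div, abs_of_pos hstep, div_le_iff₀ hstep]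
    exact hxt j
  let C₁ : ℕ → Fin L → ℂ := fun m j =>
    gridCoeff L 0 (fun x => (Real.cos (δ j * x) : ℂ) - 1) m
  let C₂ : ℕ → Fin L → ℂ := fun m j =>
    gridCoeff L (1 / 2) (fun x => Complex.I * (Real.sin (δ j * x) : ℂ)) m
  have hdecomp : WithLp.toLp 2 (Ftil.mulVec c) = WithLp.toLp 2 (F c) +
      (WithLp.toLp 2 (fun j => ∑ m ∈ range (2 * L), C₁ m j * F (D 0 m) j) +
       WithLp.toLp 2 (fun j => ∑ m ∈ range (2 * L), C₂ m j * F (D (1 / 2) m) j)) := by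
    rw [← WithLp.toLp_add, ← WithLp.toLp_add]
    congr 1
    ext j
    simp only [Matrix.mulVec, dotProduct, Pi.add_apply, F, D, Finset.mul_sum]
    rw [Finset.sum_comm, Finset.sum_comm (s := range (2 * L)), ← Finset.sum_add_distrib,
      ← Finset.sum_add_distrib]
    refine Finset.sum_congr rfl fun k _ => ?_
    have hexp := exp_sub_one_eq_sum L hL (δ j) (2 * k + 1) (by omega)
    have hfac : Ftil j k = Complex.exp (-Complex.I *
        ((((j : ℕ) - N) * (2 * π / L) : ℝ) : ℂ) * (((k : ℕ) - N : ℝ) : ℂ)) *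
        Complex.exp (Complex.I * δ j * gridPoint L (2 * k + 1)) := by
      rw [hFtil, ← Complex.exp_add]
      congr 1
      have hxk : gridPoint L (2 * k + 1) = ((k : ℕ) - N) * (2 * π / L) := hx k
      have hxtj : xt j = ((j : ℕ) - N) * (2 * π / L) - δ j * (2 * π / L) := by
        simp only [δ]
        field_simp
        ring
      rw [hxk, hxtj]
      push_cast
      ring
    rw [hfac, ← sub_add_cancel (Complex.exp (Complex.I * δ j * gridPoint L (2 * k + 1))) 1, hexp,
      mul_add, mul_one, add_mul, add_comm, mul_add, add_mul, Finset.mul_sum, Finset.mul_sum,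
      Finset.sum_mul, Finset.sum_mul]
    congr 2
    · refine Finset.sum_congr rfl fun m _ => ?_
      simp only [C₁, x]
      ring
    · refine Finset.sum_congr rfl fun m _ => ?_
      simp only [C₂, x]
      ring
  have hα2 : |α| < 1 / 2 := by rw [abs_of_nonneg hα0]; linarith
  have hb1 : ‖WithLp.toLp 2 (fun j => ∑ m ∈ range (2 * L), C₁ m j * F (D 0 m) j)‖ ≤
      (1 - Real.cos (π * α)) * B := by
    rw [← sum_cosWeight L hL α hα2]
    exact norm_toLp_sum_mul_le _ _ B C₁ (fun m => F (D 0 m))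
      (fun m hm j => norm_gridCoeff_cos_le hL (hδ j) hα.le (mem_range.1 hm))
      (fun m hm => (cosWeight_bounds hL hα0 le_rfl hα.le (mem_range.1 hm)).1)
      (fun m _ => hD 0 m)
  have hb2 : ‖WithLp.toLp 2 (fun j => ∑ m ∈ range (2 * L), C₂ m j * F (D (1 / 2) m) j)‖ ≤
      Real.sin (π * α) * B := by
    rw [← sum_sinWeight L hL α hα2]
    exact norm_toLp_sum_mul_le _ _ B C₂ (fun m => F (D (1 / 2) m))
      (fun m hm j => norm_gridCoeff_sin_le hL2 (hδ j) hα.le (mem_range.1 hm))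
      (fun m hm => (sinWeight_bounds hL2 hα0 le_rfl hα.le (mem_range.1 hm)).1)
      (fun m _ => hD (1 / 2) m)
  set φ : ℝ := 1 - Real.cos (π * α) + Real.sin (π * α) with hφ
  have hpert := (norm_add_le
    (WithLp.toLp 2 (fun j => ∑ m ∈ range (2 * L), C₁ m j * F (D 0 m) j))
    (WithLp.toLp 2 (fun j => ∑ m ∈ range (2 * L), C₂ m j * F (D (1 / 2) m) j))).trans
      (add_le_add hb1 hb2)
  rw [← add_mul, ← hφ] at hpert
  have hFc : ‖WithLp.toLp 2 (F c)‖ = B := hF c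
  have hup : ‖WithLp.toLp 2 (Ftil.mulVec c)‖ ≤ (1 + φ) * B := by
    rw [hdecomp]
    refine (norm_add_le _ _).trans ?_
    rw [hFc]
    linarith
  have hlow : (1 - φ) * B ≤ ‖WithLp.toLp 2 (Ftil.mulVec c)‖ := by
    have h := norm_sub_le_norm_add (WithLp.toLp 2 (F c))
      (WithLp.toLp 2 (fun j => ∑ m ∈ range (2 * L), C₁ m j * F (D 0 m) j) +
       WithLp.toLp 2 (fun j => ∑ m ∈ range (2 * L), C₂ m j * F (D (1 / 2) m) j))
    rw [← hdecomp, hFc] at h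
    linarith
  have hφ1 : 0 ≤ 1 - φ := by
    have hpi := Real.pi_pos
    have : Real.sin (π * α) ≤ Real.cos (π * α) := by
      rw [← Real.sin_pi_div_two_sub]
      exact Real.sin_le_sin_of_le_of_le_pi_div_two (by nlinarith) (by nlinarith) (by nlinarith)
    linarith
  have hBsq : B ^ 2 = L * ∑ k, ‖c k‖ ^ 2 := Real.sq_sqrt (by positivity)
  have hsq : ‖WithLp.toLp 2 (Ftil.mulVec c)‖ ^ 2 = ∑ j, ‖Ftil.mulVec c j‖ ^ 2 :=
    EuclideanSpace.norm_sq_eq _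
  rw [← hsq]
  have h1 := pow_le_pow_left₀ (mul_nonneg hφ1 hB0) hlow 2
  have h2 := pow_le_pow_left₀ (norm_nonneg _) hup 2
  rw [mul_pow, hBsq] at h1 h2
  rw [one_div, inv_mul_eq_div]
  constructor
  · rw [le_div_iff₀ hL']
    linarith
  · rw [div_le_iff₀ hL']
    linarith

/-- discrete Kadec frame inequalities for the NUDFT matrix. -/
theorem nudft_frame_inequalities (N : ℕ) (hN : 0 < N) (α : ℝ) (hα0 : 0 ≤ α) (hα : α < 1/4)
    (xt : Fin (2*N+1) → ℝ)
    (hxt : ∀ j, |xt j - (((j : ℕ) : ℝ) - (N : ℝ)) * (2*π/(2*N+1))| ≤ α * (2*π/(2*N+1)))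
    (Ftil : Matrix (Fin (2*N+1)) (Fin (2*N+1)) ℂ)
    (hFtil : ∀ j k, Ftil j k =
      Complex.exp (-Complex.I * (xt j : ℂ) * (((k : ℕ) : ℂ) - (N : ℂ))))
    (c : Fin (2*N+1) → ℂ) :
    (1 - (1 - Real.cos (π*α) + Real.sin (π*α)))^2 * ∑ k, ‖c k‖^2 ≤
        (1/(2*(N:ℝ)+1)) * ∑ j, ‖Ftil.mulVec c j‖^2 ∧
    (1/(2*(N:ℝ)+1)) * ∑ j, ‖Ftil.mulVec c j‖^2 ≤
        (1 + (1 - Real.cos (π*α) + Real.sin (π*α)))^2 * ∑ k, ‖c k‖^2 := by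
  have hcast : ((2 * N + 1 : ℕ) : ℝ) = 2 * N + 1 := by push_cast; ring
  rw [← hcast] at hxt ⊢
  exact nudft_frame_inequalities_of_eq N hN _ rfl α hα0 hα xt hxt Ftil hFtil c
end
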